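/- Fix β > 0, K > 0 and suppose that the set of global minimum points of G_{β,K} over ℝ is {z_1, ..., z_m} with m = 2 or m = 3, and that G_{β,K}''(z_j) > 0 for each j. For each j set σ_j² = 2βK c_β''(2βK z_j) / G_{β,K}''(z_j). Then for each j = 1, ..., m there exists A = A(z_j) > 0 such that for every a ∈ (0, A), the conditional distribution of (S_n − n z_j)/n^{1/2} under P_{n,β,K} given the event {S_n/n ∈ [z_j − a, z_j + a]} converges weakly, as n → ∞, to the centered normal distribution N(0, σ_j²). -/

import Mathlib

noncomputable section

open scoped BigOperators

/-- `c_β(t) = log[(1 + e^{−β}(e^t + e^{−t}))/(1 + 2e^{−β})]`. -/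
def cBeta (β t : ℝ) : ℝ :=
  Real.log ((1 + Real.exp (-β) * (Real.exp t + Real.exp (-t))) / (1 + 2 * Real.exp (-β)))

/-- `G_{β,K}(z) = βK z² − c_β(2βK z)`. -/
def Gfun (β K z : ℝ) : ℝ := β * K * z ^ 2 - cBeta β (2 * β * K * z)

/-- The spin space `Λ = {-1, 0, 1} ⊆ ℤ`. -/
abbrev Spin : Type := ({-1, 0, 1} : Finset ℤ)

/-- The total spin `S_n(ω) = Σ_j ω_j` (as a real number). -/
def totalSpin (n : ℕ) (ω : Fin n → Spin) : ℝ := ∑ j, ((ω j : ℤ) : ℝ)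

/-- The energy `H_{n,K}(ω) = Σ_j ω_j² − (K/n)(Σ_j ω_j)²`. -/
def ham (K : ℝ) (n : ℕ) (ω : Fin n → Spin) : ℝ :=
  (∑ j, ((ω j : ℤ) : ℝ) ^ 2) - (K / n) * (∑ j, ((ω j : ℤ) : ℝ)) ^ 2

/-- The canonical ensemble `P_{n,β,K}`: the probability mass of a configuration
`ω ∈ Λⁿ` is proportional to `exp(−β H_{n,K}(ω))`. -/
def canonP (β K : ℝ) (n : ℕ) (ω : Fin n → Spin) : ℝ :=
  Real.exp (-β * ham K n ω) / ∑ ω' : Fin n → Spin, Real.exp (-β * ham K n ω')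

open scoped Classical

/-! Write `κ = βK` and let `ρ` be the single-spin law tilted by `exp (2κz s)`. Since `z` is a
critical point of `G_{β,K}`, the mean of `ρ` is `z`, and completing the square shows that
`P_{n,β,K}` is the product law `ρⁿ` reweighted by `exp (κ Y_n²)`, where `Y_n = (S_n - n z)/√n`;
the conditioning event is `|Y_n| ≤ a√n`. Under `ρⁿ` the central limit theorem gives
`Y_n ⟹ N(0, v)` with `v = c_β''(2κz)`, and `G_{β,K}''(z) = 2κ(1 - 2κv) > 0` means `2κv < 1`,
so reweighting the limit by `exp (κ x²)` yields `N(0, v / (1 - 2κv))`. To pass to the limit in the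
unbounded weight, one bounds `𝔼[exp (κ' Y_n²); |Y_n| ≤ a√n]` uniformly in `n` for some `κ' > κ`:
by the Hubbard–Stratonovich linearization this only involves the moment generating function of
`ρ`, centered, in a neighbourhood of `0`, where it is sub-Gaussian with variance factor close to
`v`; this is what forces `a` to be small. -/

open Filter MeasureTheory ProbabilityTheory Set Topology
open scoped BoundedContinuousFunction NNReal

section WeakConvergence

variable {E : Type*} [TopologicalSpace E]

lemma abs_setIntegral_sub_setIntegral_le [MeasurableSpace E] [OpensMeasurableSpace E]
    {ν : Measure E} [IsFiniteMeasure ν] {s : Set E} {g h : E → ℝ} (hg : Continuous g)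
    {u : E →ᵇ ℝ} {δ : ℝ} (hgu : ∀ x, ‖g x - u x‖ ≤ δ * h x) (hint : IntegrableOn h s ν) :
    |∫ x in s, g x ∂ν - ∫ x in s, u x ∂ν| ≤ δ * ∫ x in s, h x ∂ν := by
  have hu : IntegrableOn u s ν := u.integrable _
  have hsub : IntegrableOn (fun x ↦ g x - u x) s ν :=
    (hint.const_mul δ).mono' (by fun_prop) (.of_forall hgu)
  have hg_int : IntegrableOn g s ν := by simpa [Pi.add_def] using hsub.add hu
  rw [← integral_sub hg_int hu, ← integral_const_mul]
  exact norm_integral_le_of_norm_le (hint.const_mul δ) (.of_forall hgu)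

variable [T2Space E] [LocallyCompactSpace E]

lemma exists_hasCompactSupport_norm_sub_le {g h : E → ℝ} (hg : Continuous g) (hh : 0 ≤ h)
    (hgh : g =o[cocompact E] h) {δ : ℝ} (hδ : 0 < δ) :
    ∃ u : E →ᵇ ℝ, HasCompactSupport u ∧ ∀ x, ‖g x - u x‖ ≤ δ * h x := by
  obtain ⟨k, hk, hgk⟩ := mem_cocompact.1 (hgh.def hδ)
  obtain ⟨χ, hχk, -, hχ, hχ01⟩ :=
    exists_continuous_one_zero_of_isCompact hk isClosed_empty (disjoint_empty k)
  have hsupp : HasCompactSupport fun x ↦ χ x * g x := hχ.mul_right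
  obtain ⟨M, hM⟩ := hsupp.exists_bound_of_continuous (by fun_prop)
  refine ⟨.ofNormedAddCommGroup _ (by fun_prop) M hM, hsupp, fun x ↦ ?_⟩
  have hfactor : g x - χ x * g x = (1 - χ x) * g x := by ring
  rw [BoundedContinuousFunction.coe_ofNormedAddCommGroup, hfactor, norm_mul]
  by_cases hx : x ∈ k
  · simpa [hχk hx] using mul_nonneg hδ.le (hh x)
  · have hg_le : ‖g x‖ ≤ δ * ‖h x‖ := hgk hx
    rw [Real.norm_of_nonneg (hh x)] at hg_le
    have hχ_le : ‖1 - χ x‖ ≤ 1 := by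
      rw [Real.norm_of_nonneg (by linarith [(hχ01 x).2])]
      linarith [(hχ01 x).1]
    exact (mul_le_of_le_one_left (norm_nonneg _) hχ_le).trans hg_le

variable [MeasurableSpace E] [OpensMeasurableSpace E]

theorem tendsto_setIntegral_of_isLittleO {ι : Type*} {l : Filter ι} {ν : ι → ProbabilityMeasure E}
    {ν₀ : ProbabilityMeasure E} (hν : Tendsto ν l (𝓝 ν₀)) {s : ι → Set E}
    (hs : ∀ k, IsCompact k → ∀ᶠ i in l, k ⊆ s i) {g h : E → ℝ} (hg : Continuous g) (hh : 0 ≤ h)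
    (hgh : g =o[cocompact E] h) (hint : ∀ᶠ i in l, IntegrableOn h (s i) (ν i)) {C : ℝ}
    (hC : ∀ᶠ i in l, ∫ x in s i, h x ∂ν i ≤ C) (hint₀ : Integrable h ν₀) :
    Tendsto (fun i ↦ ∫ x in s i, g x ∂ν i) l (𝓝 (∫ x, g x ∂ν₀)) := by
  rw [Metric.tendsto_nhds]
  intro ε hε
  set H := ∫ x, h x ∂ν₀
  obtain ⟨δ, hδ, hδε⟩ : ∃ δ > 0, δ * (|C| + H) < ε / 2 :=
    exists_pos_mul_lt (half_pos hε) _ |>.imp fun δ hδ ↦ by simpa [mul_comm] using hδ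
  obtain ⟨u, hu, hgu⟩ := exists_hasCompactSupport_norm_sub_le hg hh hgh hδ
  have hlim : |∫ x, g x ∂ν₀ - ∫ x, u x ∂ν₀| ≤ δ * H := by
    simpa using abs_setIntegral_sub_setIntegral_le hg hgu hint₀.integrableOn (s := univ)
  have hu_tendsto := ProbabilityMeasure.tendsto_iff_forall_integral_tendsto.1 hν u
  filter_upwards [Metric.tendsto_nhds.1 hu_tendsto _ (half_pos hε), hs _ hu, hint, hC]
    with i hui hsi hinti hCi
  have happrox : |∫ x in s i, g x ∂ν i - ∫ x, u x ∂ν i| ≤ δ * |C| := by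
    rw [← setIntegral_eq_integral_of_forall_compl_eq_zero fun x hx ↦
      image_eq_zero_of_notMem_tsupport fun hx' ↦ hx (hsi hx')]
    exact (abs_setIntegral_sub_setIntegral_le hg hgu hinti).trans <|
      mul_le_mul_of_nonneg_left (hCi.trans (le_abs_self C)) hδ.le
  rw [Real.dist_eq] at hui ⊢
  rw [abs_le] at happrox hlim
  rw [abs_lt] at hui ⊢
  constructor <;> linarith

end WeakConvergence

section GaussianTilt

variable {κ : ℝ} {v : ℝ≥0}

lemma exp_mul_sq_mul_gaussianPDFReal (hκv : 2 * κ * v < 1) (x : ℝ) :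
    Real.exp (κ * x ^ 2) * gaussianPDFReal 0 v x =
      (√(1 - 2 * κ * v))⁻¹ * gaussianPDFReal 0 (v / (1 - 2 * κ * v)).toNNReal x := by
  have hpos : 0 < 1 - 2 * κ * v := by linarith
  have hsqrt : √(1 - 2 * κ * v) ≠ 0 := (Real.sqrt_pos.2 hpos).ne'
  rcases eq_or_ne v 0 with rfl | hv
  · simp
  have hv' : (v : ℝ) ≠ 0 := by exact_mod_cast hv
  simp only [gaussianPDFReal, sub_zero, Real.coe_toNNReal _ (div_nonneg v.coe_nonneg hpos.le)]
  have hexp : κ * x ^ 2 + -x ^ 2 / (2 * v) = -x ^ 2 / (2 * (v / (1 - 2 * κ * v))) := by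
    field_simp
    ring
  rw [mul_left_comm, ← Real.exp_add, hexp,
    ← mul_div_assoc (2 * Real.pi), Real.sqrt_div' _ hpos.le, inv_div,
    div_eq_mul_inv √(1 - 2 * κ * v), mul_assoc √(1 - 2 * κ * v), inv_mul_cancel_left₀ hsqrt]

lemma integrable_exp_mul_sq_gaussianReal (hκv : 2 * κ * v < 1) :
    Integrable (fun x ↦ Real.exp (κ * x ^ 2)) (gaussianReal 0 v) := by
  rcases eq_or_ne v 0 with rfl | hv
  · simpa using integrable_dirac (by simp)
  rw [gaussianReal_of_var_ne_zero _ hv, gaussianPDF_def,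
    integrable_withDensity_iff_integrable_smul' (by fun_prop) (.of_forall fun x ↦ by simp)]
  simp only [ENNReal.toReal_ofReal (gaussianPDFReal_nonneg _ _ _), smul_eq_mul,
    mul_comm (gaussianPDFReal _ _ _), exp_mul_sq_mul_gaussianPDFReal hκv]
  exact (integrable_gaussianPDFReal _ _).const_mul _

lemma integral_exp_mul_sq_mul_gaussianReal (hκv : 2 * κ * v < 1) (f : ℝ → ℝ) :
    ∫ x, Real.exp (κ * x ^ 2) * f x ∂gaussianReal 0 v =
      (√(1 - 2 * κ * v))⁻¹ * ∫ x, f x ∂gaussianReal 0 (v / (1 - 2 * κ * v)).toNNReal := by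
  rcases eq_or_ne v 0 with rfl | hv
  · simp
  have hv' : (v / (1 - 2 * κ * v)).toNNReal ≠ 0 := by
    simp only [ne_eq, Real.toNNReal_eq_zero, not_le]
    exact div_pos (by positivity) (by linarith)
  simp_rw [integral_gaussianReal_eq_integral_smul hv, integral_gaussianReal_eq_integral_smul hv',
    smul_eq_mul, ← integral_const_mul, ← mul_assoc, ← exp_mul_sq_mul_gaussianPDFReal hκv]
  simp_rw [mul_comm]

end GaussianTilt

section HubbardStratonovich

variable {w : ℝ≥0}

lemma exp_mul_mul_gaussianPDFReal (t x : ℝ) :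
    Real.exp (t * x) * gaussianPDFReal 0 w x =
      Real.exp (w / 2 * t ^ 2) * gaussianPDFReal (w * t) w x := by
  rcases eq_or_ne w 0 with rfl | hw
  · simp
  have hw' : (w : ℝ) ≠ 0 := by exact_mod_cast hw
  simp only [gaussianPDFReal]
  rw [mul_left_comm, ← Real.exp_add, mul_left_comm, ← Real.exp_add]
  congr 2
  field_simp
  ring

lemma integral_exp_mul_mul_gaussianReal (t : ℝ) (f : ℝ → ℝ) :
    ∫ x, Real.exp (t * x) * f x ∂gaussianReal 0 w =
      Real.exp (w / 2 * t ^ 2) * ∫ x, f x ∂gaussianReal (w * t) w := by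
  rcases eq_or_ne w 0 with rfl | hw
  · simp
  simp_rw [integral_gaussianReal_eq_integral_smul hw, smul_eq_mul, ← integral_const_mul,
    ← mul_assoc, ← exp_mul_mul_gaussianPDFReal, mul_comm]

lemma setIntegral_exp_mul_gaussianReal (t : ℝ) {s : Set ℝ} (hs : MeasurableSet s) :
    ∫ x in s, Real.exp (t * x) ∂gaussianReal 0 w =
      Real.exp (w / 2 * t ^ 2) * (gaussianReal (w * t) w).real s := by
  rw [← integral_indicator_one hs, ← integral_exp_mul_mul_gaussianReal, ← integral_indicator hs]
  simp [indicator_apply]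

lemma exp_mul_sq_mul_gaussianReal_Icc_le {t B : ℝ} (hB : w * |t| + 1 ≤ B) :
    Real.exp (w / 2 * t ^ 2) * (gaussianReal 0 w).real (Icc 0 1) ≤
      ∫ x in Icc (-B) B, Real.exp (t * x) ∂gaussianReal 0 w := by
  rw [setIntegral_exp_mul_gaussianReal t measurableSet_Icc]
  have hshift : gaussianReal (w * t) w = (gaussianReal 0 w).map (· + w * t) := by
    rw [gaussianReal_map_add_const, zero_add]
  have hsub : Icc 0 1 ⊆ (· + w * t) ⁻¹' Icc (-B) B := fun x ⟨hx0, hx1⟩ ↦ by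
    have habs : |w * t| = w * |t| := by rw [abs_mul, NNReal.abs_eq]
    constructor <;> linarith [neg_abs_le (w * t), le_abs_self (w * t)]
  rw [hshift, map_measureReal_apply (by fun_prop) measurableSet_Icc]
  gcongr
  exact measure_ne_top _ _

/- Writing `exp (w x² / 2)` as the Gaussian average of `exp (t x)` costs only a constant factor when
`t` is restricted to a window around the tilted mean `w x`; this is why a bound on the moment
generating function on a bounded interval is enough. -/
lemma setIntegral_exp_mul_sq_mul_gaussianReal_Icc_le {ν : Measure ℝ} [IsFiniteMeasure ν] {v r B : ℝ}
    (hint : Icc (-B) B ⊆ integrableExpSet id ν)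
    (hmgf : ∀ t ∈ Icc (-B) B, mgf id ν t ≤ Real.exp (v / 2 * t ^ 2)) (hwv : w * v < 1)
    (hB : w * r + 1 ≤ B) :
    (∫ x in Icc (-r) r, Real.exp (w / 2 * x ^ 2) ∂ν) * (gaussianReal 0 w).real (Icc 0 1) ≤
      ∫ t, Real.exp (v / 2 * t ^ 2) ∂gaussianReal 0 w := by
  set γ := gaussianReal 0 w
  have hgauss : Integrable (fun t ↦ Real.exp (v / 2 * t ^ 2)) γ :=
    integrable_exp_mul_sq_gaussianReal (by linarith)
  have hprod : Integrable (fun p : ℝ × ℝ ↦ Real.exp (p.1 * p.2))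
      ((ν.restrict (Icc (-r) r)).prod (γ.restrict (Icc (-B) B))) := by
    rw [Measure.prod_restrict]
    have hcont : Continuous fun p : ℝ × ℝ ↦ Real.exp (p.1 * p.2) := by fun_prop
    exact hcont.continuousOn.integrableOn_compact (isCompact_Icc.prod isCompact_Icc)
  have hinner : ∀ t ∈ Icc (-B) B,
      ∫ x in Icc (-r) r, Real.exp (x * t) ∂ν ≤ Real.exp (v / 2 * t ^ 2) := fun t ht ↦ by
    simp_rw [mul_comm _ t]
    exact (setIntegral_le_integral (hint ht) (.of_forall fun x ↦ (Real.exp_pos _).le)).trans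
      (hmgf t ht)
  calc (∫ x in Icc (-r) r, Real.exp (w / 2 * x ^ 2) ∂ν) * γ.real (Icc 0 1)
    _ = ∫ x in Icc (-r) r, Real.exp (w / 2 * x ^ 2) * γ.real (Icc 0 1) ∂ν :=
      (integral_mul_const _ _).symm
    _ ≤ ∫ x in Icc (-r) r, ∫ t in Icc (-B) B, Real.exp (x * t) ∂γ ∂ν := by
      refine setIntegral_mono_on ?_ hprod.integral_prod_left measurableSet_Icc fun x hx ↦
        exp_mul_sq_mul_gaussianReal_Icc_le (le_trans ?_ hB)
      · exact Continuous.integrableOn_Icc (by fun_prop)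
      · gcongr
        exact abs_le.2 hx
    _ = ∫ t in Icc (-B) B, ∫ x in Icc (-r) r, Real.exp (x * t) ∂ν ∂γ := integral_integral_swap hprod
    _ ≤ ∫ t in Icc (-B) B, Real.exp (v / 2 * t ^ 2) ∂γ :=
      setIntegral_mono_on hprod.integral_prod_right hgauss.integrableOn measurableSet_Icc hinner
    _ ≤ ∫ t, Real.exp (v / 2 * t ^ 2) ∂γ :=
      setIntegral_le_integral hgauss (.of_forall fun t ↦ (Real.exp_pos _).le)

lemma gaussianReal_real_Icc_pos (hw : w ≠ 0) : 0 < (gaussianReal 0 w).real (Icc 0 1) := by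
  have hvol : volume (Icc (0 : ℝ) 1) ≠ 0 := by simp
  exact ENNReal.toReal_pos (fun h ↦ hvol (gaussianReal_absolutelyContinuous' 0 hw h))
    (measure_ne_top _ _)

end HubbardStratonovich

section QuadraticMinus

variable {f : ℝ → ℝ} {x : ℝ}

lemma deriv_const_mul_sq_sub (c : ℝ) (hf : DifferentiableAt ℝ f x) :
    deriv (fun y ↦ c * y ^ 2 - f y) x = 2 * c * x - deriv f x := by
  rw [deriv_fun_sub (by fun_prop) hf, deriv_const_mul_field, deriv_pow_field]
  push_cast
  ring

lemma iteratedDeriv_two_const_mul_sq_sub (c : ℝ) (hf : ContDiffAt ℝ 2 f x) :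
    iteratedDeriv 2 (fun y ↦ c * y ^ 2 - f y) x = 2 * c - iteratedDeriv 2 f x := by
  rw [iteratedDeriv_fun_sub (by fun_prop) hf, iteratedDeriv_const_mul_field, iteratedDeriv_pow]
  norm_num [Nat.descFactorial]
  ring

end QuadraticMinus

section CumulantBound

variable {Ω : Type*} [MeasurableSpace Ω] {μ : Measure Ω} [IsProbabilityMeasure μ] {X : Ω → ℝ}

lemma iteratedDeriv_two_cgf_zero (h : 0 ∈ interior (integrableExpSet X μ)) :
    iteratedDeriv 2 (cgf X μ) 0 = Var[X; μ] := by
  simpa using (variance_tilted_mul h).symm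

lemma eventually_mgf_le_exp_of_variance_lt (h : 0 ∈ interior (integrableExpSet X μ))
    (hX : μ[X] = 0) {v : ℝ} (hv : Var[X; μ] < v) :
    ∀ᶠ t in 𝓝 0, mgf X μ t ≤ Real.exp (v / 2 * t ^ 2) := by
  have hcont : ContDiffAt ℝ 2 (cgf X μ) 0 := (analyticAt_cgf h).contDiffAt
  have hderiv : deriv (fun t ↦ v / 2 * t ^ 2 - cgf X μ t) 0 = 0 := by
    rw [deriv_const_mul_sq_sub _ (hcont.differentiableAt two_ne_zero), deriv_cgf_zero h, hX]
    simp
  have hderiv2 : 0 < deriv (deriv fun t ↦ v / 2 * t ^ 2 - cgf X μ t) 0 := by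
    rw [← iteratedDeriv_one, ← iteratedDeriv_succ', one_add_one_eq_two,
      iteratedDeriv_two_const_mul_sq_sub _ hcont, iteratedDeriv_two_cgf_zero h]
    linarith
  have hmin : ∀ᶠ t in 𝓝 0, v / 2 * 0 ^ 2 - cgf X μ 0 ≤ v / 2 * t ^ 2 - cgf X μ t :=
    isLocalMin_of_deriv_deriv_pos hderiv2 hderiv <|
      (continuousAt_const.mul (continuousAt_id.pow 2)).sub hcont.continuousAt
  filter_upwards [hmin, mem_interior_iff_mem_nhds.1 h] with t ht hint
  rw [← exp_cgf hint]
  gcongr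
  simpa using ht

end CumulantBound

lemma isLittleO_exp_mul_sq_cocompact {c d : ℝ} (hcd : c < d) :
    (fun x : ℝ ↦ Real.exp (c * x ^ 2)) =o[cocompact ℝ] fun x ↦ Real.exp (d * x ^ 2) := by
  rw [Real.isLittleO_exp_comp_exp_comp]
  have hsq : Tendsto (fun x : ℝ ↦ x ^ 2) (cocompact ℝ) atTop := by
    simpa only [Function.comp_def, Real.norm_eq_abs, sq_abs] using
      (tendsto_pow_atTop two_ne_zero).comp (tendsto_norm_cocompact_atTop (E := ℝ))
  simpa only [sub_mul] using hsq.const_mul_atTop (sub_pos.2 hcd)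

lemma exists_pos_lt_mul_lt_one {c v : ℝ} (hcv : c * v < 1) :
    ∃ w > 0, c < w ∧ ∃ v' > v, w * v' < 1 := by
  have hmax : max c 0 * v < 1 := by
    rcases max_cases c 0 with ⟨h, -⟩ | ⟨h, -⟩ <;> simp [h, hcv]
  have hlim : Tendsto (fun ε ↦ (max c 0 + ε) * (v + ε)) (𝓝[>] 0) (𝓝 (max c 0 * v)) :=
    tendsto_nhdsWithin_of_tendsto_nhds <| Continuous.tendsto' (by fun_prop) _ _ (by simp)
  obtain ⟨ε, hlt, hε⟩ := ((hlim.eventually_lt_const hmax).and self_mem_nhdsWithin).exists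
  replace hε : 0 < ε := hε
  exact ⟨max c 0 + ε, by positivity, by linarith [le_max_left c 0], v + ε, by linarith, hlt⟩

lemma eventually_subset_Icc_mul_sqrt {a : ℝ} (ha : 0 < a) {k : Set ℝ} (hk : IsCompact k) :
    ∀ᶠ n : ℕ in atTop, k ⊆ Icc (-(a * √n)) (a * √n) := by
  obtain ⟨M, hM⟩ := hk.isBounded.exists_norm_le
  have hlarge : Tendsto (fun n : ℕ ↦ a * √n) atTop atTop :=
    (Real.tendsto_sqrt_atTop.comp tendsto_natCast_atTop_atTop).const_mul_atTop ha
  filter_upwards [hlarge.eventually_ge_atTop M] with n hn x hx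
  exact abs_le.1 ((hM x hx).trans hn)


section IID

variable {Ω : Type*} [MeasurableSpace Ω] {P : Measure Ω} {X : ℕ → Ω → ℝ}

/-- The sum `X₀ + ⋯ + X_{n-1}` on the scale `√n` of the central limit theorem; the variables `X k`
are expected to be centered. -/
def scaledSum (X : ℕ → Ω → ℝ) (n : ℕ) (ω : Ω) : ℝ := (√n)⁻¹ * ∑ k ∈ Finset.range n, X k ω

lemma aemeasurable_scaledSum (hX : ∀ k, AEMeasurable (X k) P) (n : ℕ) :
    AEMeasurable (scaledSum X n) P := by
  unfold scaledSum
  fun_prop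

lemma mgf_scaledSum (hindep : iIndepFun X P) (hident : ∀ k, IdentDistrib (X k) (X 0) P P)
    (n : ℕ) (t : ℝ) : mgf (scaledSum X n) P t = mgf (X 0) P ((√n)⁻¹ * t) ^ n := by
  have hsum : scaledSum X n = fun ω ↦ (√n)⁻¹ * (∑ k ∈ Finset.range n, X k) ω := by
    ext ω
    simp [scaledSum]
  rw [hsum, mgf_const_mul, hindep.mgf_sum₀ fun k ↦ (hident k).aemeasurable_fst]
  simp [mgf_congr_identDistrib (hident _)]

variable [IsProbabilityMeasure P]

lemma exists_forall_mgf_scaledSum_le (hindep : iIndepFun X P)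
    (hident : ∀ k, IdentDistrib (X k) (X 0) P P) (h : 0 ∈ interior (integrableExpSet (X 0) P))
    (hX : P[X 0] = 0) {v : ℝ} (hv : Var[X 0; P] < v) :
    ∃ b > 0, ∀ n : ℕ, n ≠ 0 → ∀ t ∈ Icc (-(b * √n)) (b * √n),
      t ∈ integrableExpSet (scaledSum X n) P ∧
        mgf (scaledSum X n) P t ≤ Real.exp (v / 2 * t ^ 2) := by
  obtain ⟨b, hb, hball⟩ := Metric.nhds_basis_closedBall.eventually_iff.1 <|
    (eventually_mgf_le_exp_of_variance_lt h hX hv).and (mem_interior_iff_mem_nhds.1 h)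
  refine ⟨b, hb, fun n hn t ht ↦ ?_⟩
  have hsqrt : 0 < √(n : ℝ) := by positivity
  obtain ⟨hle, hint⟩ := hball (x := (√n)⁻¹ * t) <| by
    rw [mem_closedBall_zero_iff, norm_mul, norm_inv, Real.norm_of_nonneg hsqrt.le,
      inv_mul_le_iff₀ hsqrt, mul_comm, Real.norm_eq_abs]
    exact abs_le.2 ht
  constructor
  · rw [integrableExpSet, mem_ofPred_eq, ← mgf_pos_iff, mgf_scaledSum hindep hident]
    exact pow_pos (mgf_pos hint) n
  · rw [mgf_scaledSum hindep hident]
    calc mgf (X 0) P ((√n)⁻¹ * t) ^ n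
      _ ≤ Real.exp (v / 2 * ((√n)⁻¹ * t) ^ 2) ^ n := pow_le_pow_left₀ mgf_nonneg hle n
      _ = Real.exp (v / 2 * t ^ 2) := by
        rw [← Real.exp_nat_mul, mul_pow, inv_pow, Real.sq_sqrt (Nat.cast_nonneg n)]
        field_simp

lemma exists_eventually_setIntegral_exp_mul_sq_le (hindep : iIndepFun X P)
    (hident : ∀ k, IdentDistrib (X k) (X 0) P P) (h : 0 ∈ interior (integrableExpSet (X 0) P))
    (hX : P[X 0] = 0) {w : ℝ≥0} (hw : w ≠ 0) {v : ℝ} (hv : Var[X 0; P] < v) (hwv : w * v < 1) :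
    ∃ A > 0, ∃ C, ∀ a < A, ∀ᶠ n : ℕ in atTop,
      ∫ x in Icc (-(a * √n)) (a * √n), Real.exp (w / 2 * x ^ 2) ∂P.map (scaledSum X n) ≤ C := by
  obtain ⟨b, hb, hbound⟩ := exists_forall_mgf_scaledSum_le hindep hident h hX hv
  have hw' : (0 : ℝ) < w := by exact_mod_cast pos_iff_ne_zero.2 hw
  refine ⟨b / w, by positivity, (∫ t, Real.exp (v / 2 * t ^ 2) ∂gaussianReal 0 w) /
    (gaussianReal 0 w).real (Icc 0 1), fun a ha ↦ ?_⟩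
  have hgap : 0 < b - w * a := by linarith [(lt_div_iff₀' hw').1 ha]
  have hlarge : Tendsto (fun n : ℕ ↦ (b - w * a) * √n) atTop atTop :=
    (Real.tendsto_sqrt_atTop.comp tendsto_natCast_atTop_atTop).const_mul_atTop hgap
  filter_upwards [hlarge.eventually_ge_atTop 1, eventually_ne_atTop 0] with n hn hn0
  have hmeas := aemeasurable_scaledSum (fun k ↦ (hident k).aemeasurable_fst) n
  have := Measure.isProbabilityMeasure_map hmeas
  refine (le_div_iff₀ (gaussianReal_real_Icc_pos hw)).2 <|
    setIntegral_exp_mul_sq_mul_gaussianReal_Icc_le (B := b * √n) (fun t ht ↦ ?_)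
      (fun t ht ↦ ?_) hwv (by linarith)
  · rw [integrableExpSet, mem_ofPred_eq, ← mgf_pos_iff, mgf_id_map hmeas, mgf_pos_iff]
    exact (hbound n hn0 t ht).1
  · rw [mgf_id_map hmeas]
    exact (hbound n hn0 t ht).2

theorem exists_tendsto_setIntegral_exp_mul_sq_mul (hindep : iIndepFun X P)
    (hident : ∀ k, IdentDistrib (X k) (X 0) P P) (h : 0 ∈ interior (integrableExpSet (X 0) P))
    (hX : P[X 0] = 0) {κ : ℝ} (hκ : 2 * κ * Var[X 0; P] < 1) :
    ∃ A > 0, ∀ a ∈ Ioo 0 A, ∀ f : ℝ →ᵇ ℝ, Tendsto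
      (fun n : ℕ ↦ ∫ x in Icc (-(a * √n)) (a * √n),
        Real.exp (κ * x ^ 2) * f x ∂P.map (scaledSum X n)) atTop
      (𝓝 (∫ x, Real.exp (κ * x ^ 2) * f x ∂gaussianReal 0 Var[X 0; P].toNNReal)) := by
  -- `exp (w x² / 2)` with `w` above `2κ` still has bounded integrals and controls the tails.
  obtain ⟨w, hw, hκw, v, hv, hwv⟩ := exists_pos_lt_mul_lt_one hκ
  lift w to ℝ≥0 using hw.le
  obtain ⟨A, hA, C, hC⟩ := exists_eventually_setIntegral_exp_mul_sq_le hindep hident h hX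
    (by exact_mod_cast hw.ne') hv hwv
  have hvar : (Var[X 0; P].toNNReal : ℝ) = Var[X 0; P] := Real.coe_toNNReal _ (variance_nonneg _ _)
  have hclt := (tendstoInDistribution_inv_sqrt_mul_sum_sub (HasLaw.id (μ := gaussianReal 0 _))
    (memLp_of_mem_interior_integrableExpSet h 2) hindep hident)
  simp only [hX, mul_zero, sub_zero] at hclt
  have hlaw := hclt.tendsto
  simp only [Measure.map_id] at hlaw
  refine ⟨A, hA, fun a ha f ↦ tendsto_setIntegral_of_isLittleO hlaw
    (fun k ↦ eventually_subset_Icc_mul_sqrt ha.1) (by fun_prop) (fun x ↦ (Real.exp_pos _).le)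
    ?_ ?_ (hC a ha.2) ?_⟩
  · have hf : f =O[cocompact ℝ] fun _ ↦ (1 : ℝ) :=
      .of_bound ‖f‖ (.of_forall fun x ↦ by simpa using f.norm_coe_le_norm x)
    simpa using (isLittleO_exp_mul_sq_cocompact (by linarith)).mul_isBigO hf
  · refine .of_forall fun n ↦ ?_
    have := Measure.isProbabilityMeasure_map (hclt.forall_aemeasurable n)
    exact Continuous.integrableOn_Icc (μ := P.map (scaledSum X n)) (by fun_prop)
  · refine integrable_exp_mul_sq_gaussianReal ?_
    rw [hvar]
    nlinarith

theorem exists_tendsto_setIntegral_exp_mul_sq_mul_div (hindep : iIndepFun X P)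
    (hident : ∀ k, IdentDistrib (X k) (X 0) P P) (h : 0 ∈ interior (integrableExpSet (X 0) P))
    (hX : P[X 0] = 0) {κ : ℝ} (hκ : 2 * κ * Var[X 0; P] < 1) :
    ∃ A > 0, ∀ a ∈ Ioo 0 A, ∀ f : ℝ →ᵇ ℝ, Tendsto
      (fun n : ℕ ↦
        (∫ x in Icc (-(a * √n)) (a * √n), Real.exp (κ * x ^ 2) * f x ∂P.map (scaledSum X n)) /
          ∫ x in Icc (-(a * √n)) (a * √n), Real.exp (κ * x ^ 2) ∂P.map (scaledSum X n)) atTop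
      (𝓝 (∫ x, f x ∂gaussianReal 0
        (Var[X 0; P] / (1 - 2 * κ * Var[X 0; P])).toNNReal)) := by
  obtain ⟨A, hA, hlim⟩ := exists_tendsto_setIntegral_exp_mul_sq_mul hindep hident h hX hκ
  have hvar : (Var[X 0; P].toNNReal : ℝ) = Var[X 0; P] := Real.coe_toNNReal _ (variance_nonneg _ _)
  have hsqrt : (√(1 - 2 * κ * Var[X 0; P]))⁻¹ ≠ 0 :=
    inv_ne_zero (Real.sqrt_pos.2 (sub_pos.2 hκ)).ne'
  have hgauss (f : ℝ →ᵇ ℝ) :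
      ∫ x, Real.exp (κ * x ^ 2) * f x ∂gaussianReal 0 Var[X 0; P].toNNReal =
        (√(1 - 2 * κ * Var[X 0; P]))⁻¹ *
          ∫ x, f x ∂gaussianReal 0 (Var[X 0; P] / (1 - 2 * κ * Var[X 0; P])).toNNReal := by
    rw [integral_exp_mul_sq_mul_gaussianReal (by rwa [hvar]), hvar]
  refine ⟨A, hA, fun a ha f ↦ ?_⟩
  have hnum := hlim a ha f
  have hden := hlim a ha 1
  rw [hgauss] at hnum hden
  simp only [BoundedContinuousFunction.coe_one, Pi.one_apply, mul_one, integral_const,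
    probReal_univ, smul_eq_mul] at hden
  have hdiv := hnum.div hden hsqrt
  rwa [mul_div_cancel_left₀ _ hsqrt] at hdiv

end IID

section ProductMeasure

variable {S : Type*} [MeasurableSpace S] (ρ : Measure S) [IsProbabilityMeasure ρ] {x : S → ℝ}

lemma map_scaledSum_infinitePi (hx : Measurable x) (n : ℕ) :
    (Measure.infinitePi fun _ : ℕ ↦ ρ).map (scaledSum (fun k ω ↦ x (ω k)) n) =
      (Measure.pi fun _ : Fin n ↦ ρ).map fun ω ↦ (√n)⁻¹ * ∑ j, x (ω j) := by
  have hscaled : scaledSum (fun k (ω : ℕ → S) ↦ x (ω k)) n =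
      (fun ω : Fin n → S ↦ (√n)⁻¹ * ∑ j, x (ω j)) ∘ fun ω j ↦ ω j := by
    ext ω
    simp [scaledSum, Finset.sum_range]
  rw [hscaled, ← Measure.map_map (by fun_prop) (by fun_prop), ← Measure.infinitePi_eq_pi,
    Measure.map_infinitePi_infinitePi_of_inj (P := fun _ : ℕ ↦ ρ) Fin.val_injective]

theorem exists_tendsto_setIntegral_map_pi_div (hx_meas : Measurable x)
    (h : 0 ∈ interior (integrableExpSet x ρ)) (hx : ρ[x] = 0) {κ : ℝ}
    (hκ : 2 * κ * Var[x; ρ] < 1) :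
    ∃ A > 0, ∀ a ∈ Ioo 0 A, ∀ f : ℝ →ᵇ ℝ, Tendsto
      (fun n : ℕ ↦
        (∫ y in Icc (-(a * √n)) (a * √n), Real.exp (κ * y ^ 2) * f y
          ∂(Measure.pi fun _ : Fin n ↦ ρ).map fun ω ↦ (√n)⁻¹ * ∑ j, x (ω j)) /
        ∫ y in Icc (-(a * √n)) (a * √n), Real.exp (κ * y ^ 2)
          ∂(Measure.pi fun _ : Fin n ↦ ρ).map fun ω ↦ (√n)⁻¹ * ∑ j, x (ω j)) atTop
      (𝓝 (∫ y, f y ∂gaussianReal 0 (Var[x; ρ] / (1 - 2 * κ * Var[x; ρ])).toNNReal)) := by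
  set P : Measure (ℕ → S) := Measure.infinitePi fun _ ↦ ρ
  have heval (k : ℕ) : MeasurePreserving (fun ω : ℕ → S ↦ ω k) P ρ :=
    measurePreserving_eval_infinitePi _ k
  have hident₀ (k : ℕ) : IdentDistrib (fun ω ↦ x (ω k)) x P ρ :=
    (IdentDistrib.mk (measurable_pi_apply k).aemeasurable aemeasurable_id
      ((heval k).map_eq.trans Measure.map_id.symm)).comp hx_meas
  have hindep : iIndepFun (fun k (ω : ℕ → S) ↦ x (ω k)) P := iIndepFun_infinitePi fun _ ↦ hx_meas
  have hexp : integrableExpSet (fun ω : ℕ → S ↦ x (ω 0)) P = integrableExpSet x ρ := by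
    ext t
    exact ((hident₀ 0).comp (u := fun y ↦ Real.exp (t * y)) (by fun_prop)).integrable_iff
  simpa only [(hident₀ 0).variance_eq, map_scaledSum_infinitePi ρ hx_meas, P] using
    exists_tendsto_setIntegral_exp_mul_sq_mul_div hindep
      (fun k ↦ (hident₀ k).trans (hident₀ 0).symm) (by rwa [hexp])
      ((hident₀ 0).integral_eq.trans hx) (by rwa [(hident₀ 0).variance_eq])

end ProductMeasure

lemma setIntegral_map_eq_sum {Ω : Type*} [Fintype Ω] [MeasurableSpace Ω]
    [MeasurableSingletonClass Ω] (μ : Measure Ω) [IsFiniteMeasure μ] (T : Ω → ℝ) {s : Set ℝ}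
    [DecidablePred (· ∈ s)] (hs : MeasurableSet s) {F : ℝ → ℝ} (hF : Measurable F) :
    ∫ y in s, F y ∂μ.map T = ∑ ω with T ω ∈ s, μ.real {ω} * F (T ω) := by
  have hT : Measurable T := measurable_of_finite T
  rw [setIntegral_map hs hF.aestronglyMeasurable hT.aemeasurable, ← integral_indicator (hT hs),
    integral_fintype .of_finite, Finset.sum_filter]
  simp [indicator_apply]

lemma mem_interior_integrableExpSet_of_finite {Ω : Type*} [Finite Ω] [MeasurableSpace Ω]
    [MeasurableSingletonClass Ω] (μ : Measure Ω) [IsFiniteMeasure μ] (X : Ω → ℝ) (t : ℝ) :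
    t ∈ interior (integrableExpSet X μ) := by
  have huniv : integrableExpSet X μ = univ := eq_univ_of_forall fun _ ↦ .of_finite
  simp [huniv]

section SpinLaw

/-- The real value of a spin, as an observable for the laws below. -/
abbrev spinVal (s : Spin) : ℝ := ((s : ℤ) : ℝ)

/-- The a priori law of a single spin, proportional to `exp(-β s²)` on `Λ`; its cumulant generating
function is `cBeta β`. -/
def spinLaw (β : ℝ) : Measure Spin := Measure.count.tilted fun s ↦ -β * spinVal s ^ 2

/-- The law `spinLaw β` tilted by `exp(t s)`. -/
def tiltedSpinLaw (β t : ℝ) : Measure Spin := (spinLaw β).tilted fun s ↦ t * spinVal s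

instance : Nonempty Spin := ⟨⟨0, by decide⟩⟩

instance (β : ℝ) : IsProbabilityMeasure (spinLaw β) := isProbabilityMeasure_tilted .of_finite

instance (β t : ℝ) : IsProbabilityMeasure (tiltedSpinLaw β t) :=
  isProbabilityMeasure_tilted .of_finite

variable {β : ℝ}

lemma cgf_spinLaw : cgf spinVal (spinLaw β) = cBeta β := by
  have hsum (F : ℤ → ℝ) : ∑ s : Spin, F s = F 0 + (F 1 + F (-1)) := by
    rw [Finset.sum_coe_sort ({-1, 0, 1} : Finset ℤ) F]
    simp [add_comm, add_assoc]
  ext t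
  rw [cgf, mgf, spinLaw, integral_exp_tilted, integral_count, integral_count, cBeta]
  simp only [Pi.add_apply, hsum fun s : ℤ ↦ Real.exp (-β * (s : ℝ) ^ 2 + t * s),
    hsum fun s : ℤ ↦ Real.exp (-β * (s : ℝ) ^ 2)]
  norm_num [Real.exp_add]
  ring_nf

lemma integral_tiltedSpinLaw (t : ℝ) :
    ∫ s, spinVal s ∂tiltedSpinLaw β t = deriv (cBeta β) t := by
  rw [← cgf_spinLaw]
  exact integral_tilted_mul_self (mem_interior_integrableExpSet_of_finite _ _ _)

lemma variance_tiltedSpinLaw (t : ℝ) :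
    Var[spinVal; tiltedSpinLaw β t] = iteratedDeriv 2 (cBeta β) t := by
  rw [← cgf_spinLaw]
  exact variance_tilted_mul (mem_interior_integrableExpSet_of_finite _ _ _)

lemma contDiff_cBeta : ContDiff ℝ 2 (cBeta β) := by
  rw [← cgf_spinLaw, contDiff_iff_contDiffAt]
  exact fun t ↦ (analyticAt_cgf (mem_interior_integrableExpSet_of_finite _ _ _)).contDiffAt

variable {K : ℝ}

lemma deriv_Gfun (z : ℝ) :
    deriv (Gfun β K) z = 2 * β * K * (z - deriv (cBeta β) (2 * β * K * z)) := by
  have hdiff : Differentiable ℝ (cBeta β) := contDiff_cBeta.differentiable two_ne_zero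
  unfold Gfun
  rw [deriv_const_mul_sq_sub _ (by fun_prop), deriv_comp_mul_left]
  simp only [smul_eq_mul]
  ring

lemma iteratedDeriv_two_Gfun (z : ℝ) :
    iteratedDeriv 2 (Gfun β K) z =
      2 * β * K * (1 - 2 * (β * K) * iteratedDeriv 2 (cBeta β) (2 * β * K * z)) := by
  have hcont : ContDiff ℝ 2 (cBeta β) := contDiff_cBeta
  unfold Gfun
  rw [iteratedDeriv_two_const_mul_sq_sub _ (by fun_prop), iteratedDeriv_comp_const_mul hcont]
  ring

lemma pos_and_mul_lt_one_of_iteratedDeriv_two_Gfun_pos {z : ℝ}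
    (hpos : 0 < iteratedDeriv 2 (Gfun β K) z) :
    0 < 2 * β * K ∧ 2 * (β * K) * iteratedDeriv 2 (cBeta β) (2 * β * K * z) < 1 := by
  have hvar : 0 ≤ iteratedDeriv 2 (cBeta β) (2 * β * K * z) := by
    rw [← variance_tiltedSpinLaw]
    exact variance_nonneg _ _
  rw [iteratedDeriv_two_Gfun] at hpos
  have hβK : 0 < 2 * β * K := by
    by_contra! hle
    nlinarith [mul_nonneg (neg_nonneg.2 hle) hvar]
  exact ⟨hβK, by linarith [pos_of_mul_pos_right hpos hβK.le]⟩

lemma tiltedSpinLaw_real_singleton (β t : ℝ) (s : Spin) :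
    (tiltedSpinLaw β t).real {s} = Real.exp (t * spinVal s - β * spinVal s ^ 2) /
      ∑ s', Real.exp (t * spinVal s' - β * spinVal s' ^ 2) := by
  have hcount : tiltedSpinLaw β t =
      Measure.count.tilted fun s ↦ t * spinVal s - β * spinVal s ^ 2 := by
    rw [tiltedSpinLaw, spinLaw, tilted_tilted .of_finite]
    congr 1 with s
    simp only [Pi.add_apply]
    ring
  rw [hcount, measureReal_def, tilted_apply_eq_ofReal_integral, integral_singleton, integral_count,
    ENNReal.toReal_ofReal (by positivity)]
  simp

end SpinLaw

section Conditioning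

variable {n : ℕ}

lemma inv_sqrt_mul_sum_spinVal_sub (ω : Fin n → Spin) (z : ℝ) :
    (√n)⁻¹ * ∑ j, (spinVal (ω j) - z) = (totalSpin n ω - n * z) / √n := by
  rw [Finset.sum_sub_distrib, inv_mul_eq_div]
  simp [totalSpin]

lemma totalSpin_div_mem_Icc_iff (hn : n ≠ 0) (ω : Fin n → Spin) (z a : ℝ) :
    totalSpin n ω / n ∈ Icc (z - a) (z + a) ↔
      (√n)⁻¹ * ∑ j, (spinVal (ω j) - z) ∈ Icc (-(a * √n)) (a * √n) := by
  have hsqrt : 0 < √(n : ℝ) := by positivity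
  have hscale : totalSpin n ω / n - z = (totalSpin n ω - n * z) / √n / √n := by
    rw [div_div, Real.mul_self_sqrt n.cast_nonneg]
    field_simp
  rw [inv_sqrt_mul_sum_spinVal_sub, mem_Icc (a := -(a * √n)), ← abs_le,
    ← mem_Icc_iff_abs_le, abs_sub_comm, hscale, abs_div,
    abs_of_pos hsqrt, div_le_iff₀ hsqrt]

lemma exists_exp_ham_eq (β K z : ℝ) (hn : n ≠ 0) :
    ∃ c > 0, ∀ ω : Fin n → Spin, Real.exp (-β * ham K n ω) =
      c * ((Measure.pi fun _ ↦ tiltedSpinLaw β (2 * β * K * z)).real {ω} *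
        Real.exp (β * K * ((√n)⁻¹ * ∑ j, (spinVal (ω j) - z)) ^ 2)) := by
  set t := 2 * β * K * z
  set Z := ∑ s', Real.exp (t * spinVal s' - β * spinVal s' ^ 2)
  have hn' : (n : ℝ) ≠ 0 := by exact_mod_cast hn
  have hZ : 0 < Z := Finset.sum_pos (fun _ _ ↦ Real.exp_pos _) Finset.univ_nonempty
  refine ⟨Z ^ n * Real.exp (-(β * K * n * z ^ 2)), by positivity, fun ω ↦ ?_⟩
  have hmass : (Measure.pi fun _ ↦ tiltedSpinLaw β t).real {ω} =
      Real.exp (t * totalSpin n ω - β * ∑ j, spinVal (ω j) ^ 2) / Z ^ n := by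
    simp only [measureReal_def, Measure.pi_singleton, ENNReal.toReal_prod]
    simp only [← measureReal_def, tiltedSpinLaw_real_singleton, Finset.prod_div_distrib,
      Finset.prod_const, Finset.card_univ, Fintype.card_fin, ← Real.exp_sum,
      Finset.sum_sub_distrib, ← Finset.mul_sum, totalSpin, Z]
  -- With `t = 2βKz`, completing the square in `S_n - n z` absorbs the linear tilt.
  have henergy : -β * ham K n ω = -(β * K * n * z ^ 2) +
      (t * totalSpin n ω - β * ∑ j, spinVal (ω j) ^ 2) +
        β * K * ((totalSpin n ω - n * z) / √n) ^ 2 := by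
    rw [div_pow, Real.sq_sqrt n.cast_nonneg, ham, ← totalSpin]
    field_simp
    ring
  rw [hmass, inv_sqrt_mul_sum_spinVal_sub, henergy, Real.exp_add, Real.exp_add]
  field_simp

lemma exists_sum_canonP_mul_eq (β K z : ℝ) (hn : n ≠ 0) :
    ∃ c > 0, ∀ a : ℝ, ∀ F : ℝ → ℝ, Measurable F →
      ∑ ω with totalSpin n ω / n ∈ Icc (z - a) (z + a),
        canonP β K n ω * F ((totalSpin n ω - n * z) / √n) =
      c * ∫ y in Icc (-(a * √n)) (a * √n), Real.exp (β * K * y ^ 2) * F y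
        ∂(Measure.pi fun _ : Fin n ↦ tiltedSpinLaw β (2 * β * K * z)).map
          fun ω ↦ (√n)⁻¹ * ∑ j, (spinVal (ω j) - z) := by
  obtain ⟨c, hc, hham⟩ := exists_exp_ham_eq β K z hn
  have hZ : 0 < ∑ ω : Fin n → Spin, Real.exp (-β * ham K n ω) :=
    Finset.sum_pos (fun _ _ ↦ Real.exp_pos _) Finset.univ_nonempty
  refine ⟨c / ∑ ω : Fin n → Spin, Real.exp (-β * ham K n ω), by positivity, fun a F hF ↦ ?_⟩
  rw [setIntegral_map_eq_sum _ _ measurableSet_Icc (by fun_prop), Finset.mul_sum]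
  refine Finset.sum_congr (Finset.filter_congr fun ω _ ↦ totalSpin_div_mem_Icc_iff hn ω z a)
    fun ω _ ↦ ?_
  rw [canonP, hham, inv_sqrt_mul_sum_spinVal_sub]
  ring

end Conditioning

theorem conditioned_clt_total_spin_general (β K z : ℝ) (hz : deriv (Gfun β K) z = 0)
    (hpos : 0 < iteratedDeriv 2 (Gfun β K) z) :
    ∃ A : ℝ, 0 < A ∧ ∀ a ∈ Ioo (0 : ℝ) A,
      ∀ f : ℝ → ℝ, Continuous f → (∃ C : ℝ, ∀ x, |f x| ≤ C) →
        Tendsto (fun n : ℕ ↦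
            (∑ ω : Fin n → Spin with totalSpin n ω / n ∈ Icc (z - a) (z + a),
              canonP β K n ω * f ((totalSpin n ω - n * z) / √n)) /
            (∑ ω : Fin n → Spin with totalSpin n ω / n ∈ Icc (z - a) (z + a), canonP β K n ω))
          atTop
          (𝓝 (∫ x, f x ∂gaussianReal 0
            (2 * β * K * iteratedDeriv 2 (cBeta β) (2 * β * K * z) /
              iteratedDeriv 2 (Gfun β K) z).toNNReal)) := by
  set ρ := tiltedSpinLaw β (2 * β * K * z)
  obtain ⟨hβK, hvar⟩ := pos_and_mul_lt_one_of_iteratedDeriv_two_Gfun_pos hpos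
  have hmean : ρ[fun s ↦ spinVal s - z] = 0 := by
    have hcrit : deriv (cBeta β) (2 * β * K * z) = z := by
      rw [deriv_Gfun, mul_eq_zero, sub_eq_zero] at hz
      exact (hz.resolve_left hβK.ne').symm
    rw [integral_sub .of_finite .of_finite, integral_tiltedSpinLaw, hcrit]
    simp
  have hVar : Var[fun s ↦ spinVal s - z; ρ] = iteratedDeriv 2 (cBeta β) (2 * β * K * z) := by
    rw [variance_sub_const (by fun_prop), variance_tiltedSpinLaw]
  obtain ⟨A, hA, hlim⟩ := exists_tendsto_setIntegral_map_pi_div ρ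
    (measurable_of_finite fun s ↦ spinVal s - z) (mem_interior_integrableExpSet_of_finite _ _ _)
    hmean (κ := β * K) (by rwa [hVar])
  refine ⟨A, hA, fun a ha f hf ⟨C, hC⟩ ↦ ?_⟩
  have hσ : 2 * β * K * iteratedDeriv 2 (cBeta β) (2 * β * K * z) / iteratedDeriv 2 (Gfun β K) z =
      iteratedDeriv 2 (cBeta β) (2 * β * K * z) /
        (1 - 2 * (β * K) * iteratedDeriv 2 (cBeta β) (2 * β * K * z)) := by
    rw [iteratedDeriv_two_Gfun, mul_div_mul_left _ _ (by linarith)]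
  rw [hσ, ← hVar]
  refine (hlim a ha (.ofNormedAddCommGroup f hf C hC)).congr' ?_
  filter_upwards [eventually_ne_atTop 0] with n hn
  obtain ⟨c, hc, hsum⟩ := exists_sum_canonP_mul_eq β K z hn
  have hden := hsum a 1 measurable_one
  simp only [Pi.one_apply, mul_one] at hden
  rw [hsum a f hf.measurable, hden, mul_div_mul_left _ _ hc.ne']
  rfl

/-- Suppose the set of global minimum points of `G_{β,K}` is
`{z_1, …, z_m}` with `m = 2` or `m = 3` distinct points and `G_{β,K}''(z_j) > 0` for
each `j`.  With `σ_j² = 2βK c_β''(2βK z_j)/G_{β,K}''(z_j)`, for each `j` there is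
`A > 0` such that for every `a ∈ (0, A)` the conditional distribution of
`(S_n − n z_j)/n^{1/2}` under `P_{n,β,K}` given `{S_n/n ∈ [z_j − a, z_j + a]}`
converges weakly to the centered Gaussian with variance `σ_j²`. -/
theorem conditioned_clt_total_spin (β K : ℝ) (hβ : 0 < β) (hK : 0 < K)
    (m : ℕ) (hm : m = 2 ∨ m = 3) (zs : Fin m → ℝ) (hzs : Function.Injective zs)
    (hset : {z : ℝ | IsMinOn (Gfun β K) Set.univ z} = Set.range zs)
    (hpos : ∀ j : Fin m, 0 < iteratedDeriv 2 (Gfun β K) (zs j)) :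
    ∀ j : Fin m, ∃ A : ℝ, 0 < A ∧ ∀ a ∈ Set.Ioo (0 : ℝ) A,
      ∀ f : ℝ → ℝ, Continuous f → (∃ C : ℝ, ∀ x, |f x| ≤ C) →
        Filter.Tendsto (fun n : ℕ =>
            (∑ ω ∈ Finset.univ.filter (fun ω : Fin n → Spin =>
                totalSpin n ω / n ∈ Set.Icc (zs j - a) (zs j + a)),
              canonP β K n ω * f ((totalSpin n ω - n * zs j) / Real.sqrt n)) /
            (∑ ω ∈ Finset.univ.filter (fun ω : Fin n → Spin =>
                totalSpin n ω / n ∈ Set.Icc (zs j - a) (zs j + a)),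
              canonP β K n ω))
          Filter.atTop
          (nhds (∫ x, f x ∂(ProbabilityTheory.gaussianReal 0
            (Real.toNNReal (2 * β * K * iteratedDeriv 2 (cBeta β) (2 * β * K * zs j) /
              iteratedDeriv 2 (Gfun β K) (zs j)))))) := by
  intro j
  have hmin : zs j ∈ {z : ℝ | IsMinOn (Gfun β K) univ z} := hset ▸ mem_range_self j
  exact conditioned_clt_total_spin_general β K (zs j)
    (hmin.isLocalMin univ_mem).deriv_eq_zero (hpos j)
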